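/- arXiv:1909.07173 — 2 statements merged into one kernel-verified Lean document; each statement's English description precedes it below -/
import Mathlib

section
/- Let U² be the orthogonal direct sum of two copies of the hyperbolic plane, with standard basis {e₁, f₁, e₂, f₂}. Then SO^+(U²) is generated by the four Eichler transvections t(e₂,e₁), t(e₂,f₁), t(f₂,e₁) and t(f₂,f₁). -/
open Matrix

/-- The ℝ-bilinear extension of the integral bilinear form with Gram matrix `M`. -/
def bilinR {ι : Type*} [Fintype ι] (M : Matrix ι ι ℤ) (x y : ι → ℝ) : ℝ :=
  x ⬝ᵥ ((M.map (Int.cast : ℤ → ℝ)) *ᵥ y)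

/-- `w` is a tuple of vectors of `L ⊗ ℝ` spanning a maximal positive definite subspace:
its Gram matrix is positive definite and no longer tuple has positive definite Gram matrix. -/
def IsMaxPosTuple {ι : Type*} [Fintype ι] (M : Matrix ι ι ℤ) {k : ℕ}
    (w : Fin k → ι → ℝ) : Prop :=
  (Matrix.of fun i j => bilinR M (w i) (w j)).PosDef ∧
    ∀ w' : Fin (k + 1) → ι → ℝ,
      ¬ (Matrix.of fun i j => bilinR M (w' i) (w' j)).PosDef

/-- `g` preserves the orientation of the positive cone of the lattice with Gram matrix `M`:
for every basis `w` of a maximal positive definite subspace `W` of `L ⊗ ℝ`, the determinant of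
the matrix `(B(wᵢ, g wⱼ))` (which equals, up to the positive factor `det (Gram w)`, the
determinant of the orthogonal projection of `g|_W` back to `W`) is positive. -/
def OrientPres {ι : Type*} [Fintype ι] (M : Matrix ι ι ℤ) (g : Matrix ι ι ℤ) : Prop :=
  ∀ (k : ℕ) (w : Fin k → ι → ℝ), IsMaxPosTuple M w →
    0 < (Matrix.of fun i j : Fin k =>
          bilinR M (w i) ((g.map (Int.cast : ℤ → ℝ)) *ᵥ w j)).det

/-- `g` is an isometry of the lattice with Gram matrix `M`. -/
def IsIsometry {ι : Type*} [Fintype ι] (M : Matrix ι ι ℤ) (g : Matrix ι ι ℤ) : Prop :=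
  gᵀ * M * g = M

/-- A vector of a lattice is primitive if it is divisible only by units. -/
def IsPrimitiveVec {ι : Type*} (l : ι → ℤ) : Prop :=
  ∀ (c : ℤ) (x : ι → ℤ), l = c • x → IsUnit c

/-- The Eichler transvection `t(e,a) : v ↦ v - (a,v)e + (e,v)a - m(e,v)e` of the lattice with
Gram matrix `M`, where `(e,e) = 0`, `(e,a) = 0` and `(a,a) = 2m`, written as a matrix. -/
def tMat {ι : Type*} [Fintype ι] [DecidableEq ι] (M : Matrix ι ι ℤ) (e a : ι → ℤ) (m : ℤ) :
    Matrix ι ι ℤ :=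
  1 - Matrix.vecMulVec e (M *ᵥ a) + Matrix.vecMulVec a (M *ᵥ e) - m • Matrix.vecMulVec e (M *ᵥ e)

/-- The Gram matrix of `U² = U ⊕ U` in the standard basis `e₁, f₁, e₂, f₂`. -/
def U2G : Matrix (Fin 4) (Fin 4) ℤ :=
  !![0,1,0,0;
     1,0,0,0;
     0,0,0,1;
     0,0,1,0]

def e1 : Fin 4 → ℤ := ![1,0,0,0]
def f1 : Fin 4 → ℤ := ![0,1,0,0]
def e2 : Fin 4 → ℤ := ![0,0,1,0]
def f2 : Fin 4 → ℤ := ![0,0,0,1]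

/-!
The sign of `det (wᵢ, g wⱼ)`, for a basis `w` of a maximal positive definite subspace, is
multiplicative in the isometry `g`, since `g w` is homotopic, through positive definite frames,
to its orthogonal projection to the span of `w`. Hence `SO⁺` is a group.
It contains the Eichler transvections because over `ℝ` each of them is a square,
`t(e,a) = t(e,a/2)²`.

Conversely, `U²` is `M₂(ℤ)` with quadratic form `2 det`, and the four transvections are elementary
row and column operations, so they generate the image of `SL₂(ℤ) × SL₂(ℤ)` acting by
`X ↦ P X Qᵀ`. For an isometry `g`, the Smith normal form brings `g e₁` back to `e₁`, unipotent
matrices then bring `g f₁` back to `f₁`, and what is left is an isometry of the second hyperbolic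
plane, which is trivial as soon as it lies in `SO⁺`.
-/

section Isometries

variable {ι R S : Type*} [Fintype ι] [DecidableEq ι] [CommRing R] [CommRing S]

/-- The matrices preserving the bilinear form with Gram matrix `A`, over any commutative ring;
over `ℤ` membership unfolds to `IsIsometry A`. -/
def isometrySubmonoid (A : Matrix ι ι R) : Submonoid (Matrix ι ι R) where
  carrier := {g | gᵀ * A * g = A}
  one_mem' := by simp
  mul_mem' {g h} hg hh := by
    calc (g * h)ᵀ * A * (g * h) = hᵀ * (gᵀ * A * g) * h := by
          simp only [transpose_mul, Matrix.mul_assoc]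
      _ = A := by rw [hg, hh]

lemma mem_isometrySubmonoid {A g : Matrix ι ι R} : g ∈ isometrySubmonoid A ↔ gᵀ * A * g = A :=
  Iff.rfl

lemma map_mem_isometrySubmonoid (f : R →+* S) {A g : Matrix ι ι R}
    (hg : g ∈ isometrySubmonoid A) : g.map f ∈ isometrySubmonoid (A.map f) := by
  rw [mem_isometrySubmonoid] at hg ⊢
  rw [← transpose_map, ← Matrix.map_mul, ← Matrix.map_mul, hg]

lemma inv_mem_isometrySubmonoid {A : Matrix ι ι R} {g : (Matrix ι ι R)ˣ}
    (hg : g.1 ∈ isometrySubmonoid A) : g⁻¹.1 ∈ isometrySubmonoid A := by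
  rw [mem_isometrySubmonoid] at hg ⊢
  have hinv : g⁻¹.1ᵀ * g.1ᵀ = 1 := by rw [← transpose_mul, Units.mul_inv, transpose_one]
  calc g⁻¹.1ᵀ * A * g⁻¹.1
      = g⁻¹.1ᵀ * (g.1ᵀ * A * g.1) * g⁻¹.1 := by rw [hg]
    _ = (g⁻¹.1ᵀ * g.1ᵀ) * A * (g.1 * g⁻¹.1) := by simp only [Matrix.mul_assoc]
    _ = A := by rw [hinv, Units.mul_inv, one_mul, mul_one]

lemma dotProduct_mulVec_of_mem_isometrySubmonoid {A g : Matrix ι ι R}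
    (hg : g ∈ isometrySubmonoid A) (x y : ι → R) :
    (g *ᵥ x) ⬝ᵥ (A *ᵥ (g *ᵥ y)) = x ⬝ᵥ (A *ᵥ y) := by
  rw [← vecMul_transpose, ← dotProduct_mulVec, mulVec_mulVec, mulVec_mulVec,
    mem_isometrySubmonoid.mp hg]

end Isometries

section EichlerTriples

variable {ι R S : Type*} [Fintype ι] [CommRing R] [CommRing S]

lemma dotProduct_mulVec_comm_of_isSymm {A : Matrix ι ι R} (hA : A.IsSymm) (x y : ι → R) :
    x ⬝ᵥ (A *ᵥ y) = y ⬝ᵥ (A *ᵥ x) := by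
  rw [dotProduct_mulVec, ← mulVec_transpose, hA.eq, dotProduct_comm]

/-- The conditions on `(e, a, m)` under which the Eichler transvection `t(e,a)`, with `m` in the
role of `½(a,a)`, is an isometry. -/
structure IsEichlerTriple (A : Matrix ι ι R) (e a : ι → R) (m : R) : Prop where
  isotropic : e ⬝ᵥ (A *ᵥ e) = 0
  orthogonal : e ⬝ᵥ (A *ᵥ a) = 0
  norm_eq : a ⬝ᵥ (A *ᵥ a) = 2 * m

namespace IsEichlerTriple

variable {A : Matrix ι ι R} {e a : ι → R} {m : R}

lemma map (f : R →+* S) (h : IsEichlerTriple A e a m) :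
    IsEichlerTriple (A.map f) (f ∘ e) (f ∘ a) (f m) := by
  have map_form (x y : ι → R) : (f ∘ x) ⬝ᵥ (A.map f *ᵥ (f ∘ y)) = f (x ⬝ᵥ (A *ᵥ y)) := by
    rw [f.map_dotProduct]
    exact congrArg _ (funext fun i => (f.map_mulVec A y i).symm)
  exact ⟨by rw [map_form, h.isotropic, map_zero], by rw [map_form, h.orthogonal, map_zero],
    by rw [map_form, h.norm_eq, map_mul, map_ofNat]⟩

lemma smul (c : R) (h : IsEichlerTriple A e a m) : IsEichlerTriple A e (c • a) (c ^ 2 * m) where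
  isotropic := h.isotropic
  orthogonal := by rw [mulVec_smul, dotProduct_smul, h.orthogonal, smul_zero]
  norm_eq := by
    rw [mulVec_smul, dotProduct_smul, smul_dotProduct, h.norm_eq, smul_eq_mul, smul_eq_mul]
    ring

end IsEichlerTriple

end EichlerTriples

section EichlerTransvections

variable {ι R S : Type*} [Fintype ι] [DecidableEq ι] [CommRing R] [CommRing S]

/-- The Eichler transvection `t(e,a)` over an arbitrary commutative ring, with `m` in the role of
`½(a,a)`; over `ℤ` it unfolds to `tMat`. -/
def eichler (A : Matrix ι ι R) (e a : ι → R) (m : R) : Matrix ι ι R :=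
  1 - vecMulVec e (A *ᵥ a) + vecMulVec a (A *ᵥ e) - m • vecMulVec e (A *ᵥ e)

lemma map_eichler (f : R →+* S) (A : Matrix ι ι R) (e a : ι → R) (m : R) :
    (eichler A e a m).map f = eichler (A.map f) (f ∘ e) (f ∘ a) (f m) := by
  ext i j
  simp [eichler, vecMulVec_apply, RingHom.map_mulVec, Matrix.one_apply, apply_ite f]

lemma eichler_zero (A : Matrix ι ι R) (e : ι → R) : eichler A e 0 0 = 1 := by
  simp [eichler]

lemma eichler_mul_eichler {A : Matrix ι ι R} (hA : A.IsSymm) {e a b : ι → R} (m n : R)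
    (he : e ⬝ᵥ (A *ᵥ e) = 0) (ha : e ⬝ᵥ (A *ᵥ a) = 0) (hb : e ⬝ᵥ (A *ᵥ b) = 0) :
    eichler A e a m * eichler A e b n = eichler A e (a + b) (m + n + a ⬝ᵥ (A *ᵥ b)) := by
  have form_comm (x y : ι → R) : (A *ᵥ x) ⬝ᵥ y = x ⬝ᵥ (A *ᵥ y) := by
    rw [dotProduct_comm, dotProduct_mulVec_comm_of_isSymm hA]
  have ha' : a ⬝ᵥ (A *ᵥ e) = 0 := by rw [dotProduct_mulVec_comm_of_isSymm hA, ha]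
  simp only [eichler, mul_sub, mul_add, sub_mul, add_mul, one_mul, mul_one, smul_mul_assoc,
    mul_smul_comm, vecMulVec_mul_vecMulVec, form_comm, he, ha', hb, zero_smul, vecMulVec_zero,
    mulVec_add, vecMulVec_add, add_vecMulVec, add_smul, vecMulVec_smul, smul_zero]
  module

lemma transpose_eichler_mul {A : Matrix ι ι R} (hA : A.IsSymm) (e a : ι → R) (m : R) :
    (eichler A e a m)ᵀ * A = A * eichler A e (-a) m := by
  have vecMul_eq (x : ι → R) : x ᵥ* A = A *ᵥ x := by rw [← mulVec_transpose, hA.eq]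
  simp only [eichler, transpose_sub, transpose_add, transpose_one, transpose_smul,
    transpose_vecMulVec, sub_mul, add_mul, mul_sub, mul_add, one_mul, mul_one, smul_mul_assoc,
    mul_smul_comm, vecMulVec_mul, mul_vecMulVec, vecMul_eq, mulVec_neg, neg_vecMulVec,
    vecMulVec_neg, mul_neg]
  abel

lemma eichler_mem_isometrySubmonoid {A : Matrix ι ι R} (hA : A.IsSymm) {e a : ι → R} {m : R}
    (h : IsEichlerTriple A e a m) : eichler A e a m ∈ isometrySubmonoid A := by
  have hneg : e ⬝ᵥ (A *ᵥ (-a)) = 0 := by rw [mulVec_neg, dotProduct_neg, h.orthogonal, neg_zero]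
  have hm : m + m + (-a) ⬝ᵥ (A *ᵥ a) = 0 := by rw [neg_dotProduct, h.norm_eq]; ring
  rw [mem_isometrySubmonoid, transpose_eichler_mul hA, Matrix.mul_assoc,
    eichler_mul_eichler hA m m h.isotropic hneg h.orthogonal, hm, neg_add_cancel, eichler_zero,
    mul_one]

lemma eichler_eq_mul_self {K : Type*} [Field K] [NeZero (2 : K)] {A : Matrix ι ι K}
    (hA : A.IsSymm) {e a : ι → K} {m : K} (h : IsEichlerTriple A e a m) :
    eichler A e a m =
      eichler A e ((2⁻¹ : K) • a) (2⁻¹ ^ 2 * m) * eichler A e ((2⁻¹ : K) • a) (2⁻¹ ^ 2 * m) := by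
  have half := h.smul (2⁻¹ : K)
  have h2 : (2 : K) ≠ 0 := NeZero.ne 2
  rw [eichler_mul_eichler hA _ _ h.isotropic half.orthogonal half.orthogonal, half.norm_eq]
  congr 1
  · rw [← add_smul, ← two_mul, mul_inv_cancel₀ h2, one_smul]
  · field_simp
    ring

end EichlerTransvections

section MaximalPositiveFrames

variable {ι : Type*} [Fintype ι] {k : ℕ}

/-- The rows of `W` form a basis of a maximal positive definite subspace for the real form with
Gram matrix `A`; this is `IsMaxPosTuple` with the tuple written as a matrix. -/
structure IsMaxPosFrame (A : Matrix ι ι ℝ) (W : Matrix (Fin k) ι ℝ) : Prop where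
  posDef : (W * A * Wᵀ).PosDef
  not_posDef : ∀ V : Matrix (Fin (k + 1)) ι ℝ, ¬ (V * A * Vᵀ).PosDef

lemma dotProduct_gram_mulVec {κ R : Type*} [Fintype κ] [CommRing R] (A : Matrix ι ι R)
    (V : Matrix κ ι R) (x : κ → R) : x ⬝ᵥ ((V * A * Vᵀ) *ᵥ x) = (x ᵥ* V) ⬝ᵥ (A *ᵥ (x ᵥ* V)) := by
  rw [← mulVec_mulVec, ← mulVec_mulVec, mulVec_transpose, dotProduct_mulVec]

lemma gram_mul_transpose {κ R : Type*} [CommRing R] [DecidableEq ι] {A g : Matrix ι ι R}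
    (hg : g ∈ isometrySubmonoid A) (V : Matrix κ ι R) :
    (V * gᵀ) * A * (V * gᵀ)ᵀ = V * A * Vᵀ := by
  conv_rhs => rw [← mem_isometrySubmonoid.mp hg]
  simp only [transpose_mul, transpose_transpose, Matrix.mul_assoc]

lemma isHermitian_gram {κ : Type*} {A : Matrix ι ι ℝ} (hA : A.IsSymm) (V : Matrix κ ι ℝ) :
    (V * A * Vᵀ).IsHermitian := by
  rw [isHermitian_iff_isSymm]
  simp only [IsSymm, transpose_mul, transpose_transpose, hA.eq, Matrix.mul_assoc]

lemma posDef_gram_vecCons {A : Matrix ι ι ℝ} (hA : A.IsSymm) {W : Matrix (Fin k) ι ℝ}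
    (hW : (W * A * Wᵀ).PosDef) {u : ι → ℝ} (hu : 0 < u ⬝ᵥ (A *ᵥ u)) (hWu : W *ᵥ (A *ᵥ u) = 0) :
    (of (vecCons u W.row) * A * (of (vecCons u W.row))ᵀ).PosDef := by
  refine .of_dotProduct_mulVec_pos (isHermitian_gram hA _) fun x hx => ?_
  have hperp : (vecTail x ᵥ* W) ⬝ᵥ (A *ᵥ u) = 0 := by
    rw [← dotProduct_mulVec, hWu, dotProduct_zero]
  have hquad : star x ⬝ᵥ ((of (vecCons u W.row) * A * (of (vecCons u W.row))ᵀ) *ᵥ x) =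
      vecHead x ^ 2 * (u ⬝ᵥ (A *ᵥ u)) + vecTail x ⬝ᵥ ((W * A * Wᵀ) *ᵥ vecTail x) := by
    rw [star_trivial, dotProduct_gram_mulVec, dotProduct_gram_mulVec, vecMul_cons,
      show of W.row = W from rfl]
    simp only [mulVec_add, mulVec_smul, add_dotProduct, dotProduct_add, smul_dotProduct,
      dotProduct_smul, hperp, dotProduct_mulVec_comm_of_isSymm hA u (vecTail x ᵥ* W), smul_eq_mul]
    ring
  rw [hquad]
  by_cases htail : vecTail x = 0
  · have hhead : vecHead x ≠ 0 := fun h0 => hx (by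
      rw [← cons_head_tail x, htail, h0, cons_zero_zero])
    rw [htail, zero_dotProduct, add_zero]
    positivity
  · exact add_pos_of_nonneg_of_pos (by positivity) (hW.dotProduct_mulVec_pos htail)

lemma IsMaxPosFrame.det_ne_zero {A : Matrix ι ι ℝ} (hA : A.IsSymm) {W V : Matrix (Fin k) ι ℝ}
    (hW : IsMaxPosFrame A W) (hV : (V * A * Vᵀ).PosDef) : (W * A * Vᵀ).det ≠ 0 := by
  intro hdet
  obtain ⟨c, hc, hWVc⟩ := exists_mulVec_eq_zero_iff.mpr hdet
  refine hW.not_posDef _ (posDef_gram_vecCons hA hW.posDef (u := c ᵥ* V) ?_ ?_)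
  · rw [← dotProduct_gram_mulVec]
    exact hV.dotProduct_mulVec_pos hc
  · rwa [← mulVec_transpose, mulVec_mulVec, mulVec_mulVec]

lemma not_posDef_gram_of_nonpos_on_ker {A : Matrix ι ι ℝ} (P : Matrix (Fin k) ι ℝ)
    (hP : ∀ v, P *ᵥ v = 0 → v ⬝ᵥ (A *ᵥ v) ≤ 0) (V : Matrix (Fin (k + 1)) ι ℝ) :
    ¬ (V * A * Vᵀ).PosDef := by
  intro hV
  have hker : LinearMap.ker (P * Vᵀ).mulVecLin ≠ ⊥ :=
    LinearMap.ker_ne_bot_of_finrank_lt (by simp)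
  obtain ⟨x, hx, hx0⟩ := Submodule.exists_mem_ne_zero_of_ne_bot hker
  have hPx : P *ᵥ (x ᵥ* V) = 0 := by rwa [← mulVec_transpose, mulVec_mulVec]
  have hpos := hV.dotProduct_mulVec_pos hx0
  rw [star_trivial, dotProduct_gram_mulVec] at hpos
  exact (hP _ hPx).not_gt hpos

lemma posDef_convex_combination {κ : Type*} {G H : Matrix κ κ ℝ} (hG : G.PosDef)
    (hH : H.PosDef) {s : ℝ} (hs : s ∈ Set.Icc (0 : ℝ) 1) : ((1 - s) • G + s • H).PosDef := by
  rcases hs.2.lt_or_eq with hs1 | rfl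
  · exact (hG.smul (sub_pos.mpr hs1)).add_posSemidef (hH.posSemidef.smul hs.1)
  · simpa only [sub_self, zero_smul, zero_add, one_smul] using hH

lemma gram_segment_of_orthogonal {κ R : Type*} [CommRing R] {A : Matrix ι ι R} (hA : A.IsSymm)
    {V₀ V₁ : Matrix κ ι R} (horth : V₀ * A * (V₁ - V₀)ᵀ = 0) (t : R) :
    (V₀ + t • (V₁ - V₀)) * A * (V₀ + t • (V₁ - V₀))ᵀ =
      (1 - t ^ 2) • (V₀ * A * V₀ᵀ) + t ^ 2 • (V₁ * A * V₁ᵀ) := by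
  obtain ⟨N, rfl⟩ : ∃ N, V₁ = V₀ + N := ⟨V₁ - V₀, (add_sub_cancel _ _).symm⟩
  rw [add_sub_cancel_left] at horth ⊢
  have horth' : N * A * V₀ᵀ = 0 := by
    have := congrArg transpose horth
    simpa only [transpose_mul, transpose_transpose, hA.eq, transpose_zero,
      ← Matrix.mul_assoc] using this
  simp only [transpose_add, transpose_smul, Matrix.add_mul, Matrix.mul_add, Matrix.smul_mul,
    Matrix.mul_smul, horth, horth']
  module

lemma mul_pos_of_continuousOn_of_ne_zero {f : ℝ → ℝ} {a b : ℝ}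
    (hf : ContinuousOn f (Set.uIcc a b)) (hne : ∀ t ∈ Set.uIcc a b, f t ≠ 0) : 0 < f a * f b := by
  by_contra! hle
  have hzero : (0 : ℝ) ∈ Set.uIcc (f a) (f b) := by
    rw [Set.mem_uIcc]
    exact (mul_nonpos_iff.mp hle).symm.imp id fun h => ⟨h.2, h.1⟩
  obtain ⟨t, ht, hft⟩ := intermediate_value_uIcc hf hzero
  exact hne t ht hft

namespace IsMaxPosFrame

variable {A : Matrix ι ι ℝ} {W : Matrix (Fin k) ι ℝ}

lemma det_mul_det_pos_of_orthogonal (hA : A.IsSymm) (hW : IsMaxPosFrame A W)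
    {V₀ V₁ : Matrix (Fin k) ι ℝ} (hV₀ : (V₀ * A * V₀ᵀ).PosDef) (hV₁ : (V₁ * A * V₁ᵀ).PosDef)
    (horth : V₀ * A * (V₁ - V₀)ᵀ = 0) : 0 < (W * A * V₀ᵀ).det * (W * A * V₁ᵀ).det := by
  let f : ℝ → ℝ := fun t => (W * A * (V₀ + t • (V₁ - V₀))ᵀ).det
  have hf : Continuous f := by fun_prop
  have hne : ∀ t ∈ Set.uIcc (0 : ℝ) 1, f t ≠ 0 := fun t ht => by
    rw [Set.uIcc_of_le zero_le_one] at ht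
    refine hW.det_ne_zero hA ?_
    rw [gram_segment_of_orthogonal hA horth]
    exact posDef_convex_combination hV₀ hV₁ ⟨sq_nonneg t, pow_le_one₀ ht.1 ht.2⟩
  have h01 := mul_pos_of_continuousOn_of_ne_zero hf.continuousOn hne
  simpa only [f, zero_smul, add_zero, one_smul, add_sub_cancel] using h01

lemma det_isometry_ne_zero [DecidableEq ι] (hA : A.IsSymm) (hW : IsMaxPosFrame A W)
    {T : Matrix ι ι ℝ} (hT : T ∈ isometrySubmonoid A) : (W * A * T * Wᵀ).det ≠ 0 := by
  have hTW := hW.det_ne_zero hA (V := W * Tᵀ) (by rw [gram_mul_transpose hT]; exact hW.posDef)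
  rwa [transpose_mul, transpose_transpose, ← Matrix.mul_assoc] at hTW

/-- The orthogonal projection of `T W` to the span of `W` has coordinate matrix `C`, and the linear
homotopy from `S C W` to `S T W` stays within positive definite frames. -/
lemma det_mul_det_mul_det_pos [DecidableEq ι] (hA : A.IsSymm) (hW : IsMaxPosFrame A W)
    {S T : Matrix ι ι ℝ} (hS : S ∈ isometrySubmonoid A) (hT : T ∈ isometrySubmonoid A) :
    0 < (W * A * S * Wᵀ).det * (W * A * T * Wᵀ).det * (W * A * (S * T) * Wᵀ).det := by
  set G := W * A * Wᵀ with hG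
  have hGdet : 0 < G.det := hW.posDef.det_pos
  obtain ⟨C, hC⟩ : ∃ C, G * C = W * A * T * Wᵀ :=
    ⟨G⁻¹ * (W * A * T * Wᵀ), mul_nonsing_inv_cancel_left _ _ hGdet.ne'.isUnit⟩
  have hCdet : C.det ≠ 0 := by
    have hTW := hW.det_isometry_ne_zero hA hT
    rw [← hC, det_mul] at hTW
    exact right_ne_zero_of_mul hTW
  have gram_V₀ : (Cᵀ * W * Sᵀ) * A * (Cᵀ * W * Sᵀ)ᵀ = Cᵀ * G * C := by
    rw [gram_mul_transpose hS]
    simp only [hG, transpose_mul, transpose_transpose, Matrix.mul_assoc]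
  have gram_V₁ : (W * (S * T)ᵀ) * A * (W * (S * T)ᵀ)ᵀ = G := gram_mul_transpose (mul_mem hS hT) W
  have cross : (Cᵀ * W * Sᵀ) * A * (W * (S * T)ᵀ)ᵀ = Cᵀ * G * C := by
    calc (Cᵀ * W * Sᵀ) * A * (W * (S * T)ᵀ)ᵀ
        = Cᵀ * W * (Sᵀ * A * S) * T * Wᵀ := by
          simp only [transpose_mul, transpose_transpose, Matrix.mul_assoc]
      _ = Cᵀ * G * C := by
          rw [mem_isometrySubmonoid.mp hS, Matrix.mul_assoc Cᵀ G, hC]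
          simp only [Matrix.mul_assoc]
  have hV₀ : (Cᵀ * G * C).PosDef :=
    (IsUnit.posDef_star_left_conjugate_iff ((isUnit_iff_isUnit_det C).mpr hCdet.isUnit)).mpr
      hW.posDef
  have hpos := hW.det_mul_det_pos_of_orthogonal hA (by rwa [gram_V₀])
    (by rw [gram_V₁]; exact hW.posDef)
    (by rw [transpose_sub, Matrix.mul_sub, cross, gram_V₀, sub_self])
  have hSC : W * A * (Cᵀ * W * Sᵀ)ᵀ = W * A * S * Wᵀ * C := by
    simp only [transpose_mul, transpose_transpose, Matrix.mul_assoc]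
  have hST : W * A * (W * (S * T)ᵀ)ᵀ = W * A * (S * T) * Wᵀ := by
    simp only [transpose_mul, transpose_transpose, Matrix.mul_assoc]
  rw [hSC, hST, det_mul] at hpos
  rw [← hC, det_mul]
  calc 0 < G.det * ((W * A * S * Wᵀ).det * C.det * (W * A * (S * T) * Wᵀ).det) :=
        mul_pos hGdet hpos
    _ = _ := by ring

end IsMaxPosFrame

end MaximalPositiveFrames

section OrientationPreserving

variable {ι : Type*} [Fintype ι] {M : Matrix ι ι ℤ}

lemma of_bilinR {κ : Type*} (v w : κ → ι → ℝ) :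
    (of fun i j => bilinR M (v i) (w j)) = of v * M.map (Int.castRingHom ℝ) * (of w)ᵀ := by
  rw [Matrix.mul_assoc]
  rfl

lemma isMaxPosTuple_iff {k : ℕ} {w : Fin k → ι → ℝ} :
    IsMaxPosTuple M w ↔ IsMaxPosFrame (M.map (Int.castRingHom ℝ)) (of w) := by
  simp only [IsMaxPosTuple, of_bilinR]
  exact ⟨fun h => ⟨h.1, h.2⟩, fun h => ⟨h.1, h.2⟩⟩

lemma orientPres_iff {g : Matrix ι ι ℤ} :
    OrientPres M g ↔ ∀ (k : ℕ) (W : Matrix (Fin k) ι ℝ),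
      IsMaxPosFrame (M.map (Int.castRingHom ℝ)) W →
        0 < (W * M.map (Int.castRingHom ℝ) * g.map (Int.castRingHom ℝ) * Wᵀ).det := by
  have transpose_image {k : ℕ} (w : Fin k → ι → ℝ) :
      (of fun j => g.map (Int.cast : ℤ → ℝ) *ᵥ w j)ᵀ = g.map (Int.castRingHom ℝ) * (of w)ᵀ := rfl
  simp only [OrientPres, isMaxPosTuple_iff, of_bilinR, transpose_image, ← Matrix.mul_assoc]
  rfl

variable [DecidableEq ι]

/-- The group `SO⁺` of the lattice with Gram matrix `M`, as a subgroup of the group of all its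
`ℤ`-linear automorphisms. -/
def SOPlus (hM : M.IsSymm) : Subgroup (Matrix ι ι ℤ)ˣ where
  carrier := {g | IsIsometry M g.1 ∧ g.1.det = 1 ∧ OrientPres M g.1}
  one_mem' := by
    refine ⟨(isometrySubmonoid M).one_mem, det_one, orientPres_iff.mpr fun k W hW => ?_⟩
    simpa using hW.posDef.det_pos
  mul_mem' {g h} hg hh := by
    refine ⟨(isometrySubmonoid M).mul_mem hg.1 hh.1, ?_, orientPres_iff.mpr fun k W hW => ?_⟩
    · rw [Units.val_mul, det_mul, hg.2.1, hh.2.1, mul_one]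
    · have hpos := hW.det_mul_det_mul_det_pos (hM.map _) (map_mem_isometrySubmonoid _ hg.1)
        (map_mem_isometrySubmonoid _ hh.1)
      rw [Units.val_mul, Matrix.map_mul]
      exact pos_of_mul_pos_right hpos
        (mul_pos (orientPres_iff.mp hg.2.2 k W hW) (orientPres_iff.mp hh.2.2 k W hW)).le
  inv_mem' {g} hg := by
    have hinv := inv_mem_isometrySubmonoid hg.1
    refine ⟨hinv, ?_, orientPres_iff.mpr fun k W hW => ?_⟩
    · simp [hg.2.1]
    · have hpos := hW.det_mul_det_mul_det_pos (hM.map _) (map_mem_isometrySubmonoid _ hg.1)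
        (map_mem_isometrySubmonoid _ hinv)
      rw [← Matrix.map_mul, Units.mul_inv, Matrix.map_one _ (map_zero _) (map_one _),
        Matrix.mul_one] at hpos
      exact (mul_pos_iff_of_pos_left (orientPres_iff.mp hg.2.2 k W hW)).mp
        (pos_of_mul_pos_left hpos hW.posDef.det_pos.le)

lemma mem_SOPlus_of_map_eq_mul_self (hM : M.IsSymm) {g : (Matrix ι ι ℤ)ˣ} (hg : IsIsometry M g.1)
    {S : Matrix ι ι ℝ} (hS : S ∈ isometrySubmonoid (M.map (Int.castRingHom ℝ)))
    (hgS : g.1.map (Int.castRingHom ℝ) = S * S) : g ∈ SOPlus hM := by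
  refine ⟨hg, ?_, orientPres_iff.mpr fun k W hW => ?_⟩
  · have hdet : (g.1.det : ℝ) = S.det ^ 2 := by
      rw [sq, ← det_mul, ← hgS]
      exact (Int.castRingHom ℝ).map_det g.1
    have hnonneg : 0 ≤ g.1.det := by exact_mod_cast hdet ▸ sq_nonneg S.det
    have hunit := Int.isUnit_iff.mp ((isUnit_iff_isUnit_det g.1).mp g.isUnit)
    lia
  · have hpos := hW.det_mul_det_mul_det_pos (hM.map _) hS hS
    rw [hgS]
    exact pos_of_mul_pos_right hpos (mul_self_nonneg _)

lemma mem_SOPlus_of_eq_tMat (hM : M.IsSymm) {e a : ι → ℤ} {m : ℤ} (h : IsEichlerTriple M e a m)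
    {g : (Matrix ι ι ℤ)ˣ} (hg : g.1 = tMat M e a m) : g ∈ SOPlus hM := by
  have hM' : (M.map (Int.castRingHom ℝ)).IsSymm := hM.map _
  have hreal := h.map (Int.castRingHom ℝ)
  refine mem_SOPlus_of_map_eq_mul_self hM (hg ▸ eichler_mem_isometrySubmonoid hM h)
    (eichler_mem_isometrySubmonoid hM' (hreal.smul 2⁻¹)) ?_
  rw [← eichler_eq_mul_self hM' hreal, ← map_eichler, hg]
  rfl

end OrientationPreserving

section SpecialLinearGroup

open scoped MatrixGroups
open ModularGroup

lemma subgroup_eq_top_of_T_mem_of_transpose_T_mem {H : Subgroup SL(2, ℤ)} (hT : T ∈ H)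
    (hT' : T.transpose ∈ H) : H = ⊤ := by
  have hS : S = T⁻¹ * T.transpose * T⁻¹ := by decide
  rw [← top_le_iff, ← SpecialLinearGroup.SL2Z_generators, Subgroup.closure_le]
  rintro _ (rfl | rfl)
  · rw [hS]
    exact H.mul_mem (H.mul_mem (H.inv_mem hT) hT') (H.inv_mem hT)
  · exact hT

lemma exists_SL2_mulVec_eq_gcd (a b : ℤ) :
    ∃ P : SL(2, ℤ), (P : Matrix (Fin 2) (Fin 2) ℤ) *ᵥ ![a, b] = ![(Int.gcd a b : ℤ), 0] := by
  rcases Nat.eq_zero_or_pos (Int.gcd a b) with h0 | hpos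
  · obtain ⟨rfl, rfl⟩ := Int.gcd_eq_zero_iff.mp h0
    exact ⟨1, by simp⟩
  · obtain ⟨a', b', hcop, ha, hb⟩ := Int.exists_gcd_one hpos
    obtain ⟨Q, hQ0, hQ1⟩ := (Int.isCoprime_iff_gcd_eq_one.mpr hcop).exists_SL2_col 0
    have hcol : ![a, b] = (Q : Matrix (Fin 2) (Fin 2) ℤ) *ᵥ ![(Int.gcd a b : ℤ), 0] := by
      ext i
      fin_cases i <;> simpa [mulVec, dotProduct, hQ0, hQ1]
    refine ⟨Q⁻¹, ?_⟩
    rw [hcol, mulVec_mulVec, ← Matrix.SpecialLinearGroup.coe_mul, inv_mul_cancel,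
      Matrix.SpecialLinearGroup.coe_one, one_mulVec]

lemma exists_SL2_mul_row_one_eq_zero {X : Matrix (Fin 2) (Fin 2) ℤ} (hX : X.det = 0) :
    ∃ P : SL(2, ℤ), ((P : Matrix (Fin 2) (Fin 2) ℤ) * X) 1 = 0 := by
  obtain ⟨w, hw, hwX⟩ := exists_vecMul_eq_zero_iff.mpr hX
  have hpos : 0 < Int.gcd (w 0) (w 1) := Int.gcd_pos_iff.mpr (by
    contrapose! hw
    ext i
    fin_cases i
    exacts [hw.1, hw.2])
  obtain ⟨a, b, hcop, ha, hb⟩ := Int.exists_gcd_one hpos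
  obtain ⟨P, hP0, hP1⟩ := (Int.isCoprime_iff_gcd_eq_one.mpr hcop).exists_SL2_row 1
  have hrow : w = (Int.gcd (w 0) (w 1) : ℤ) • (P : Matrix (Fin 2) (Fin 2) ℤ) 1 := by
    ext i
    fin_cases i <;> simpa [hP0, hP1, mul_comm]
  refine ⟨P, ?_⟩
  rw [hrow, smul_vecMul] at hwX
  exact (smul_eq_zero.mp hwX).resolve_left (by exact_mod_cast hpos.ne')

lemma exists_SL2_mul_mul_transpose_eq_diagonal {X : Matrix (Fin 2) (Fin 2) ℤ} (hX : X.det = 0) :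
    ∃ (P Q : SL(2, ℤ)) (d : ℕ),
      (P : Matrix (Fin 2) (Fin 2) ℤ) * X * (Q : Matrix (Fin 2) (Fin 2) ℤ)ᵀ =
        !![(d : ℤ), 0; 0, 0] := by
  obtain ⟨P, hP⟩ := exists_SL2_mul_row_one_eq_zero hX
  set Y := (P : Matrix (Fin 2) (Fin 2) ℤ) * X
  obtain ⟨Q, hQ⟩ := exists_SL2_mulVec_eq_gcd (Y 0 0) (Y 0 1)
  refine ⟨P, Q, Int.gcd (Y 0 0) (Y 0 1), ?_⟩
  have row_mul (i : Fin 2) : (Y * (Q : Matrix (Fin 2) (Fin 2) ℤ)ᵀ) i = Q.1 *ᵥ Y i :=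
    vecMul_transpose _ _
  have row_zero : Q.1 *ᵥ Y 0 = ![(Int.gcd (Y 0 0) (Y 0 1) : ℤ), 0] := by
    rw [← hQ]
    exact congrArg _ (FinVec.etaExpand_eq _).symm
  have row_one : Q.1 *ᵥ Y 1 = ![0, 0] := by rw [hP, mulVec_zero]; decide
  funext i
  fin_cases i
  exacts [(row_mul 0).trans row_zero, (row_mul 1).trans row_one]

end SpecialLinearGroup

section MatrixModel

open scoped MatrixGroups
open ModularGroup

/-- The identification of `U²` with the lattice of integral `2 × 2` matrices; half the quadratic
form becomes the determinant. -/
def toMatrix2 : (Fin 4 → ℤ) ≃ₗ[ℤ] Matrix (Fin 2) (Fin 2) ℤ where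
  toFun v := !![v 0, -v 2; v 3, v 1]
  invFun X := ![X 0 0, X 1 1, -X 0 1, X 1 0]
  map_add' v w := by ext i j; fin_cases i <;> fin_cases j <;> simp [add_comm]
  map_smul' c v := by ext i j; fin_cases i <;> fin_cases j <;> simp
  left_inv v := by ext i; fin_cases i <;> simp
  right_inv X := by ext i j; fin_cases i <;> fin_cases j <;> simp

lemma toMatrix2_apply (v : Fin 4 → ℤ) : toMatrix2 v = !![v 0, -v 2; v 3, v 1] := rfl

lemma dotProduct_U2G_mulVec (v w : Fin 4 → ℤ) :
    v ⬝ᵥ (U2G *ᵥ w) = v 0 * w 1 + v 1 * w 0 + v 2 * w 3 + v 3 * w 2 := by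
  simp [U2G, dotProduct, mulVec, Fin.sum_univ_four]

lemma dotProduct_U2G_mulVec_self (v : Fin 4 → ℤ) :
    v ⬝ᵥ (U2G *ᵥ v) = 2 * (toMatrix2 v).det := by
  rw [dotProduct_U2G_mulVec, toMatrix2_apply, det_fin_two_of]
  ring

/-- The action `X ↦ P X Qᵀ` of `SL₂(ℤ) × SL₂(ℤ)` on `M₂(ℤ)`. -/
def mulMulTransposeHom : SL(2, ℤ) × SL(2, ℤ) →* Module.End ℤ (Matrix (Fin 2) (Fin 2) ℤ) where
  toFun p := LinearMap.mulLeftRight ℤ (p.1, p.2.transpose)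
  map_one' := by ext1 X; simp
  map_mul' p q := by ext1 X; simp [Matrix.mul_assoc]

/-- The action `mulMulTransposeHom` transported to `U²` through `toMatrix2`. -/
def sl2ProdHom : SL(2, ℤ) × SL(2, ℤ) →* (Matrix (Fin 4) (Fin 4) ℤ)ˣ :=
  MonoidHom.toHomUnits <|
    ((toMatrix2.symm.conjAlgEquiv ℤ).trans LinearMap.toMatrixAlgEquiv' :
      _ ≃ₐ[ℤ] Matrix (Fin 4) (Fin 4) ℤ).toAlgHom.toMonoidHom.comp mulMulTransposeHom

lemma toMatrix2_sl2ProdHom_mulVec (P Q : SL(2, ℤ)) (v : Fin 4 → ℤ) :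
    toMatrix2 ((sl2ProdHom (P, Q)).1 *ᵥ v) =
      (P : Matrix (Fin 2) (Fin 2) ℤ) * toMatrix2 v * (Q : Matrix (Fin 2) (Fin 2) ℤ)ᵀ := by
  have hmulVec : (sl2ProdHom (P, Q)).1 *ᵥ v =
      toMatrix2.symm.conjAlgEquiv ℤ (mulMulTransposeHom (P, Q)) v := by
    rw [← toLinAlgEquiv'_apply]
    exact LinearMap.congr_fun (toLinAlgEquiv'_toMatrixAlgEquiv'
      (toMatrix2.symm.conjAlgEquiv ℤ (mulMulTransposeHom (P, Q)))) v
  simp [hmulVec, mulMulTransposeHom]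

lemma sl2ProdHom_T_zpow_mulVec (a b : ℤ) (v : Fin 4 → ℤ) :
    (sl2ProdHom (T ^ a, T ^ b)).1 *ᵥ v =
      ![v 0 + a * v 3 - b * v 2 + a * b * v 1, v 1, v 2 - a * v 1, v 3 + b * v 1] := by
  apply toMatrix2.injective
  rw [toMatrix2_sl2ProdHom_mulVec, coe_T_zpow, coe_T_zpow]
  ext i j
  fin_cases i <;> fin_cases j <;> simp [toMatrix2_apply, vecMul_transpose] <;> ring

/-- The subgroup generated by the transvections `t(e₂,e₁)`, `t(e₂,f₁)`, `t(f₂,e₁)`, `t(f₂,f₁)`. -/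
def eichlerSubgroup : Subgroup (Matrix (Fin 4) (Fin 4) ℤ)ˣ :=
  Subgroup.closure {g | g.1 = tMat U2G e2 e1 0 ∨ g.1 = tMat U2G e2 f1 0 ∨
    g.1 = tMat U2G f2 e1 0 ∨ g.1 = tMat U2G f2 f1 0}

lemma isSymm_U2G : U2G.IsSymm := by decide

lemma eichlerSubgroup_le_SOPlus : eichlerSubgroup ≤ SOPlus isSymm_U2G := by
  rw [eichlerSubgroup, Subgroup.closure_le]
  rintro g (hg | hg | hg | hg) <;>
    exact mem_SOPlus_of_eq_tMat isSymm_U2G ⟨by decide, by decide, by decide⟩ hg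

lemma sl2ProdHom_left_mem_eichlerSubgroup (P : SL(2, ℤ)) :
    sl2ProdHom (P, 1) ∈ eichlerSubgroup := by
  have htop : eichlerSubgroup.comap (sl2ProdHom.comp (MonoidHom.inl _ _)) = ⊤ := by
    refine subgroup_eq_top_of_T_mem_of_transpose_T_mem ?_ (inv_mem_iff.mp ?_)
    · exact Subgroup.subset_closure (.inl (by decide : (sl2ProdHom (T, 1)).1 = tMat U2G e2 e1 0))
    · exact Subgroup.subset_closure (.inr <| .inr <| .inr
        (by decide : (sl2ProdHom (T.transpose⁻¹, 1)).1 = tMat U2G f2 f1 0))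
  exact (Subgroup.eq_top_iff' _).mp htop P

lemma sl2ProdHom_right_mem_eichlerSubgroup (Q : SL(2, ℤ)) :
    sl2ProdHom (1, Q) ∈ eichlerSubgroup := by
  have htop : eichlerSubgroup.comap (sl2ProdHom.comp (MonoidHom.inr _ _)) = ⊤ := by
    refine subgroup_eq_top_of_T_mem_of_transpose_T_mem (inv_mem_iff.mp ?_) ?_
    · exact Subgroup.subset_closure (.inr <| .inr <| .inl
        (by decide : (sl2ProdHom (1, T⁻¹)).1 = tMat U2G f2 e1 0))
    · exact Subgroup.subset_closure (.inr <| .inl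
        (by decide : (sl2ProdHom (1, T.transpose)).1 = tMat U2G e2 f1 0))
  exact (Subgroup.eq_top_iff' _).mp htop Q

lemma sl2ProdHom_mem_eichlerSubgroup (P Q : SL(2, ℤ)) : sl2ProdHom (P, Q) ∈ eichlerSubgroup := by
  have hsplit : sl2ProdHom (P, Q) = sl2ProdHom (P, 1) * sl2ProdHom (1, Q) := by
    rw [← map_mul, Prod.mk_mul_mk, mul_one, one_mul]
  rw [hsplit]
  exact mul_mem (sl2ProdHom_left_mem_eichlerSubgroup P) (sl2ProdHom_right_mem_eichlerSubgroup Q)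

end MatrixModel

section Reduction

open scoped MatrixGroups
open ModularGroup

variable {g : (Matrix (Fin 4) (Fin 4) ℤ)ˣ}

lemma exists_sl2ProdHom_mul_mulVec_e1 (hg : IsIsometry U2G g.1) :
    ∃ P Q : SL(2, ℤ), (sl2ProdHom (P, Q) * g).1 *ᵥ e1 = e1 := by
  have hdet : (toMatrix2 (g.1 *ᵥ e1)).det = 0 := by
    have hnorm := dotProduct_mulVec_of_mem_isometrySubmonoid hg e1 e1
    rw [dotProduct_U2G_mulVec_self, dotProduct_U2G_mulVec_self] at hnorm
    simpa [toMatrix2_apply, e1] using hnorm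
  obtain ⟨P, Q, d, hPQ⟩ := exists_SL2_mul_mul_transpose_eq_diagonal hdet
  have hd : (sl2ProdHom (P, Q) * g).1 *ᵥ e1 = (d : ℤ) • e1 := by
    apply toMatrix2.injective
    rw [Units.val_mul, ← mulVec_mulVec, toMatrix2_sl2ProdHom_mulVec, hPQ]
    simp [toMatrix2_apply, e1]
  have hd_dvd : (d : ℤ) ∣ 1 := by
    have hinv := congrArg ((sl2ProdHom (P, Q) * g)⁻¹.1 *ᵥ ·) hd
    simp only [mulVec_mulVec, Units.inv_mul, one_mulVec, mulVec_smul] at hinv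
    exact ⟨_, congrFun hinv 0⟩
  have hd_one : d = 1 := Nat.dvd_one.mp (by exact_mod_cast hd_dvd)
  exact ⟨P, Q, by rw [hd, hd_one, Nat.cast_one, one_smul]⟩

lemma exists_sl2ProdHom_mul_mulVec_f1 (hg : IsIsometry U2G g.1) (he1 : g.1 *ᵥ e1 = e1) :
    ∃ P Q : SL(2, ℤ), (sl2ProdHom (P, Q) * g).1 *ᵥ e1 = e1 ∧
      (sl2ProdHom (P, Q) * g).1 *ᵥ f1 = f1 := by
  set w := g.1 *ᵥ f1 with hw
  have hw_one : w 1 = 1 := by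
    have h := dotProduct_mulVec_of_mem_isometrySubmonoid hg e1 f1
    rw [he1, ← hw, dotProduct_U2G_mulVec, dotProduct_U2G_mulVec] at h
    simpa [e1, f1] using h
  have hw_zero : w 0 = -(w 2 * w 3) := by
    have h := dotProduct_mulVec_of_mem_isometrySubmonoid hg f1 f1
    rw [← hw, dotProduct_U2G_mulVec, dotProduct_U2G_mulVec, hw_one] at h
    have hnorm : w 0 + w 0 + w 2 * w 3 + w 3 * w 2 = 0 := by
      simpa [f1] using h
    linarith
  refine ⟨T ^ w 2, T ^ (-w 3), ?_, ?_⟩ <;>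
    rw [Units.val_mul, ← mulVec_mulVec, sl2ProdHom_T_zpow_mulVec]
  · rw [he1]
    simp [e1]
  · rw [← hw, hw_zero, hw_one, f1]
    congr <;> ring

/-- The rows `e₁ + f₁` and `e₂ + f₂` span a maximal positive definite subspace of `U² ⊗ ℝ`. -/
def hyperbolicFrame : Matrix (Fin 2) (Fin 4) ℤ :=
  !![1, 1, 0, 0; 0, 0, 1, 1]

lemma isMaxPosFrame_hyperbolicFrame :
    IsMaxPosFrame (U2G.map (Int.castRingHom ℝ)) (hyperbolicFrame.map (Int.castRingHom ℝ)) where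
  posDef := by
    have hgram : hyperbolicFrame * U2G * hyperbolicFrameᵀ = diagonal fun _ => 2 := by decide
    rw [← transpose_map, ← Matrix.map_mul, ← Matrix.map_mul, hgram, diagonal_map (map_zero _)]
    exact PosDef.diagonal fun _ => by simp
  not_posDef := not_posDef_gram_of_nonpos_on_ker (hyperbolicFrame.map (Int.castRingHom ℝ))
    fun v hv => by
    have hv01 : v 0 + v 1 = 0 := by
      simpa [hyperbolicFrame, mulVec, dotProduct, Fin.sum_univ_four] using congrFun hv 0
    have hv23 : v 2 + v 3 = 0 := by
      simpa [hyperbolicFrame, mulVec, dotProduct, Fin.sum_univ_four] using congrFun hv 1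
    have hquad : v ⬝ᵥ (U2G.map (Int.castRingHom ℝ) *ᵥ v) =
        v 0 * v 1 + v 1 * v 0 + (v 2 * v 3 + v 3 * v 2) := by
      simp [U2G, mulVec, dotProduct, Fin.sum_univ_four, add_assoc]
    rw [hquad, eq_neg_of_add_eq_zero_right hv01, eq_neg_of_add_eq_zero_right hv23]
    linarith [mul_self_nonneg (v 0), mul_self_nonneg (v 2)]

lemma det_hyperbolicFrame_pos {g : Matrix (Fin 4) (Fin 4) ℤ} (hg : OrientPres U2G g) :
    0 < (hyperbolicFrame * U2G * g * hyperbolicFrameᵀ).det := by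
  have hreal := orientPres_iff.mp hg 2 _ isMaxPosFrame_hyperbolicFrame
  rw [← transpose_map, ← Matrix.map_mul, ← Matrix.map_mul, ← Matrix.map_mul] at hreal
  exact Int.cast_pos.mp (hreal.trans_eq ((Int.castRingHom ℝ).map_det _).symm)

/-- The endomorphism `id ⊕ B` of `U² = U ⊕ U`. -/
def idDirectSum (B : Matrix (Fin 2) (Fin 2) ℤ) : Matrix (Fin 4) (Fin 4) ℤ :=
  !![1, 0, 0, 0; 0, 1, 0, 0; 0, 0, B 0 0, B 0 1; 0, 0, B 1 0, B 1 1]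

lemma det_idDirectSum (B : Matrix (Fin 2) (Fin 2) ℤ) :
    (idDirectSum B).det = B 0 0 * B 1 1 - B 0 1 * B 1 0 := by
  simp [idDirectSum, det_succ_row_zero, Fin.sum_univ_succ, Fin.succAbove, sub_eq_add_neg]

lemma det_hyperbolicFrame_idDirectSum (B : Matrix (Fin 2) (Fin 2) ℤ) :
    (hyperbolicFrame * U2G * idDirectSum B * hyperbolicFrameᵀ).det =
      2 * (B 0 0 + B 0 1 + B 1 0 + B 1 1) := by
  have hmat : hyperbolicFrame * U2G * idDirectSum B * hyperbolicFrameᵀ =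
      !![2, 0; 0, B 0 0 + B 0 1 + B 1 0 + B 1 1] := by
    ext i j
    fin_cases i <;> fin_cases j <;>
      simp [hyperbolicFrame, U2G, idDirectSum, vecMul_transpose, ← add_assoc, add_right_comm]
  rw [hmat, det_fin_two_of, zero_mul, sub_zero]

lemma entries_of_isIsometry_idDirectSum {B : Matrix (Fin 2) (Fin 2) ℤ}
    (hB : IsIsometry U2G (idDirectSum B)) :
    B 0 0 * B 1 0 = 0 ∧ B 0 1 * B 1 1 = 0 ∧ B 0 0 * B 1 1 + B 0 1 * B 1 0 = 1 := by
  have form_e2_e2 : 2 * (B 0 0 * B 1 0) = 0 := by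
    simpa [U2G, idDirectSum, Matrix.mul_apply, Fin.sum_univ_four, two_mul, mul_comm]
      using congrFun₂ hB 2 2
  have form_f2_f2 : 2 * (B 0 1 * B 1 1) = 0 := by
    simpa [U2G, idDirectSum, Matrix.mul_apply, Fin.sum_univ_four, two_mul, mul_comm]
      using congrFun₂ hB 3 3
  have form_e2_f2 : B 0 0 * B 1 1 + B 0 1 * B 1 0 = 1 := by
    simpa [U2G, idDirectSum, Matrix.mul_apply, Fin.sum_univ_four, add_comm, mul_comm]
      using congrFun₂ hB 2 3
  exact ⟨by lia, by lia, form_e2_f2⟩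

lemma eq_one_of_idDirectSum {B : Matrix (Fin 2) (Fin 2) ℤ} (hiso : IsIsometry U2G (idDirectSum B))
    (hdet : (idDirectSum B).det = 1) (horient : OrientPres U2G (idDirectSum B)) : B = 1 := by
  obtain ⟨hcol₀, hcol₁, hsum⟩ := entries_of_isIsometry_idDirectSum hiso
  rw [det_idDirectSum] at hdet
  have hpos := det_hyperbolicFrame_pos horient
  rw [det_hyperbolicFrame_idDirectSum] at hpos
  have hprod : B 0 0 * B 1 1 = 1 := by lia
  have hdiag : B 0 0 = 1 ∧ B 1 1 = 1 ∧ B 0 1 = 0 ∧ B 1 0 = 0 := by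
    rcases Int.mul_eq_one_iff_eq_one_or_neg_one.mp hprod with ⟨h0, h1⟩ | ⟨h0, h1⟩ <;>
      rw [h0] at hcol₀ hpos <;> rw [h1] at hcol₁ hpos <;> lia
  ext i j
  fin_cases i <;> fin_cases j <;> simp [hdiag]

lemma exists_eq_idDirectSum (hg : IsIsometry U2G g.1) (he1 : g.1 *ᵥ e1 = e1)
    (hf1 : g.1 *ᵥ f1 = f1) : ∃ B, g.1 = idDirectSum B := by
  have hcol0 (i : Fin 4) : g.1 i 0 = e1 i := by
    simpa [mulVec, dotProduct, e1, Fin.sum_univ_four] using congrFun he1 i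
  have hcol1 (i : Fin 4) : g.1 i 1 = f1 i := by
    simpa [mulVec, dotProduct, f1, Fin.sum_univ_four] using congrFun hf1 i
  have hrow1 (j : Fin 4) : g.1 1 j = f1 j := by
    have h := dotProduct_mulVec_of_mem_isometrySubmonoid hg e1 (Pi.single j 1)
    rw [he1, dotProduct_U2G_mulVec, dotProduct_U2G_mulVec] at h
    fin_cases j <;> simpa [e1, f1] using h
  have hrow0 (j : Fin 4) : g.1 0 j = e1 j := by
    have h := dotProduct_mulVec_of_mem_isometrySubmonoid hg f1 (Pi.single j 1)
    rw [hf1, dotProduct_U2G_mulVec, dotProduct_U2G_mulVec] at h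
    fin_cases j <;> simpa [e1, f1] using h
  refine ⟨!![g.1 2 2, g.1 2 3; g.1 3 2, g.1 3 3], ?_⟩
  ext i j
  fin_cases i <;> fin_cases j <;> simp [hcol0, hcol1, hrow0, hrow1, idDirectSum, e1, f1]

lemma eq_one_of_mulVec_e1_of_mulVec_f1 (hg : g ∈ SOPlus isSymm_U2G) (he1 : g.1 *ᵥ e1 = e1)
    (hf1 : g.1 *ᵥ f1 = f1) : g = 1 := by
  obtain ⟨B, hB⟩ := exists_eq_idDirectSum hg.1 he1 hf1
  obtain ⟨hiso, hdet, horient⟩ := hg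
  rw [hB] at hiso hdet horient
  rw [eq_one_of_idDirectSum hiso hdet horient] at hB
  exact Units.ext (hB.trans (by decide))

lemma SOPlus_le_eichlerSubgroup : SOPlus isSymm_U2G ≤ eichlerSubgroup := by
  intro g hg
  have sl2ProdHom_mem (P Q : SL(2, ℤ)) : sl2ProdHom (P, Q) ∈ SOPlus isSymm_U2G :=
    eichlerSubgroup_le_SOPlus (sl2ProdHom_mem_eichlerSubgroup P Q)
  obtain ⟨P, Q, he1⟩ := exists_sl2ProdHom_mul_mulVec_e1 hg.1
  have hmem := mul_mem (sl2ProdHom_mem P Q) hg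
  obtain ⟨P', Q', he1', hf1'⟩ := exists_sl2ProdHom_mul_mulVec_f1 hmem.1 he1
  have hone := eq_one_of_mulVec_e1_of_mulVec_f1 (mul_mem (sl2ProdHom_mem P' Q') hmem) he1' hf1'
  have hgen := one_mem eichlerSubgroup
  rwa [← hone, Subgroup.mul_mem_cancel_left _ (sl2ProdHom_mem_eichlerSubgroup P' Q'),
    Subgroup.mul_mem_cancel_left _ (sl2ProdHom_mem_eichlerSubgroup P Q)] at hgen

end Reduction

/-- `SO⁺(U²)` is generated by the four Eichler transvections
`t(e₂,e₁)`, `t(e₂,f₁)`, `t(f₂,e₁)` and `t(f₂,f₁)`.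
The ambient group `(Matrix (Fin 4) (Fin 4) ℤ)ˣ` is `GL(U²)`. -/
theorem stmt_4 :
    (Subgroup.closure
        {g : (Matrix (Fin 4) (Fin 4) ℤ)ˣ |
          (g : Matrix (Fin 4) (Fin 4) ℤ) = tMat U2G e2 e1 0 ∨
          (g : Matrix (Fin 4) (Fin 4) ℤ) = tMat U2G e2 f1 0 ∨
          (g : Matrix (Fin 4) (Fin 4) ℤ) = tMat U2G f2 e1 0 ∨
          (g : Matrix (Fin 4) (Fin 4) ℤ) = tMat U2G f2 f1 0} :
      Set ((Matrix (Fin 4) (Fin 4) ℤ)ˣ)) =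
    {g : (Matrix (Fin 4) (Fin 4) ℤ)ˣ |
      IsIsometry U2G (g : Matrix (Fin 4) (Fin 4) ℤ) ∧
        (g : Matrix (Fin 4) (Fin 4) ℤ).det = 1 ∧
        OrientPres U2G (g : Matrix (Fin 4) (Fin 4) ℤ)} := by
  change (eichlerSubgroup : Set (Matrix (Fin 4) (Fin 4) ℤ)ˣ) = SOPlus isSymm_U2G
  rw [le_antisymm eichlerSubgroup_le_SOPlus SOPlus_le_eichlerSubgroup]
end

section
/- Let Λ be an even unimodular lattice and w ∈ Λ with (w,w) = 2. Then every isometry γ of the orthogonal complement w^⊥ ⊆ Λ extends uniquely to an isometry γ̃ of Λ satisfying γ̃(w) = w. -/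
/-!
Put `π = B w w`, which is `2` in the theorem; what matters is that the residue ring `R / π` has
only the elements `0` and `1`. Nondegeneracy modulo `π` gives `u` with `B w u = 1`, so
`Λ = w^⊥ ⊕ R u`, and `k = w - π u` lies in `w^⊥`. A vector that pairs with `w^⊥` into `π R` lies in
`π Λ` or in `w + π Λ`. The vector `γ k` is of this kind, and it is not in `π Λ` because
`B (γ k) (γ k) = B k k` is not divisible by `π ^ 2`. Hence `γ k = w - π u'` for some `u'`, and
sending `u` to `u'` extends `γ` to a linear map fixing `w`. That this map is an invertible isometry
and unique can be tested on `w^⊥` and `w`, because `π Λ ⊆ w^⊥ + R w`.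
-/

open LinearMap (BilinForm ker)

section Module

variable {R M N : Type*} [CommRing R] [AddCommGroup M] [Module R M] [AddCommGroup N] [Module R N]

theorem exists_linearMap_extending_ker {φ : M →ₗ[R] R} {u : M} (hu : φ u = 1)
    (h : ker φ →ₗ[R] N) (n : N) :
    ∃ f : M →ₗ[R] N, f u = n ∧ ∀ a : ker φ, f a = h a := by
  let proj : M →ₗ[R] ker φ :=
    (LinearMap.id - φ.smulRight u).codRestrict (ker φ) fun x => by simp [hu]
  have proj_self : proj u = 0 := Subtype.ext <| show u - φ u • u = 0 by simp [hu]
  have proj_coe (a : ker φ) : proj a = a := Subtype.ext <| show (a : M) - φ a • u = a by simp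
  exact ⟨h ∘ₗ proj + φ.smulRight n, by simp [proj_self, hu], fun a => by simp [proj_coe]⟩

theorem linearMap_eq_of_eqOn_ker [Module.IsTorsionFree R N] {φ : M →ₗ[R] R} {w : M}
    (hw : IsRegular (φ w)) {f g : M →ₗ[R] N} (hfw : f w = g w)
    (hker : ∀ a : ker φ, f a = g a) : f = g := by
  ext x
  have hmem : φ w • x - φ x • w ∈ ker φ := by simp [mul_comm]
  have hsmul : φ w • f x = φ w • g x := by simpa [hfw] using hker ⟨_, hmem⟩
  exact hw.isSMulRegular hsmul

theorem bilinForm_eq_of_eqOn_ker {φ : M →ₗ[R] R} {w : M} (hw : IsRegular (φ w))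
    {B C : BilinForm R M} (hww : B w w = C w w) (hwk : ∀ a : ker φ, B w a = C w a)
    (hkw : ∀ a : ker φ, B a w = C a w) (hkk : ∀ a b : ker φ, B a b = C a b) : B = C := by
  refine linearMap_eq_of_eqOn_ker hw ?_ fun a => ?_
  · exact linearMap_eq_of_eqOn_ker hw hww hwk
  · exact linearMap_eq_of_eqOn_ker hw (hkw a) (hkk a)

end Module

section Lattice

variable {R Λ : Type*} [CommRing R] [AddCommGroup Λ] [Module R Λ] {π : R} {B : BilinForm R Λ}

/-- The form `B` is nondegenerate modulo `π`: a vector whose pairings are all divisible by `π` is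
itself divisible by `π`. For a lattice over `ℤ` of finite rank and a prime `π`, this says that `π`
does not divide the discriminant. -/
def NondegenerateMod (B : BilinForm R Λ) (π : R) : Prop :=
  ∀ v : Λ, (∀ y, π ∣ B v y) → ∃ z, v = π • z

theorem nondegenerateMod_of_bijective (hπ : IsRegular π)
    (hB : Function.Bijective fun x : Λ => (B x : Λ →ₗ[R] R)) : NondegenerateMod B π := by
  intro v hv
  choose φ hφ using hv
  let φLin : Λ →ₗ[R] R :=
    { toFun := φ
      map_add' := fun x y => hπ.left <| by simp only [mul_add, ← hφ, map_add]
      map_smul' := fun c x => hπ.left <| by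
        simp only [RingHom.id_apply, smul_eq_mul, mul_left_comm π, ← hφ, map_smul] }
  obtain ⟨z, hz : B z = φLin⟩ := hB.surjective φLin
  refine ⟨z, hB.injective <| LinearMap.ext fun y => ?_⟩
  simp [hz, hφ y, φLin]

theorem ne_smul_of_not_sq_dvd {v : Λ} (hv : ¬ π ^ 2 ∣ B v v) (z : Λ) : v ≠ π • z := by
  rintro rfl
  exact hv ⟨B z z, by simp only [map_smul, LinearMap.smul_apply, smul_eq_mul]; ring⟩

theorem not_sq_dvd_sq_mul_sub_self (hπ : IsRegular π) (hunit : ¬ IsUnit π) (c : R) :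
    ¬ π ^ 2 ∣ π ^ 2 * c - π := by
  rintro ⟨d, hd⟩
  have hone : π * (c - d) = 1 := hπ.left <| by linear_combination hd
  exact hunit (IsUnit.of_mul_eq_one _ hone)

theorem exists_apply_eq_one_of_ne_smul (hres : ∀ a : R, π ∣ a ∨ π ∣ a - 1)
    (hB : NondegenerateMod B π) {w : Λ} (hw : B w w = π) (hdiv : ∀ z, w ≠ π • z) :
    ∃ u, B w u = 1 := by
  obtain ⟨y, hy⟩ : ∃ y, ¬ π ∣ B w y := by
    by_contra! hall
    obtain ⟨z, hz⟩ := hB w hall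
    exact hdiv z hz
  obtain ⟨c, hc⟩ := (hres (B w y)).resolve_left hy
  refine ⟨y - c • w, ?_⟩
  rw [map_sub, map_smul, hw, smul_eq_mul]
  linear_combination hc

theorem exists_eq_sub_smul_of_dvd_on_ker (hres : ∀ a : R, π ∣ a ∨ π ∣ a - 1)
    (hB : NondegenerateMod B π) {w u v : Λ} (hu : B w u = 1)
    (hv : ∀ a : ker (B w), π ∣ B v a) (hdiv : ∀ z, v ≠ π • z) : ∃ z, v = w - π • z := by
  have decomp (y : Λ) : ∃ a : ker (B w), y = a + B w y • u :=
    ⟨⟨y - B w y • u, by simp [hu]⟩, by simp⟩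
  have hvu : ¬ π ∣ B v u := by
    intro hdvd
    obtain ⟨z, hz⟩ := hB v fun y => by
      obtain ⟨a, ha⟩ := decomp y
      rw [ha, map_add, map_smul]
      exact dvd_add (hv a) (hdvd.mul_left _)
    exact hdiv z hz
  have hvu' : π ∣ B v u - 1 := (hres _).resolve_left hvu
  obtain ⟨z, hz⟩ := hB (v - w) fun y => by
    obtain ⟨a, ha⟩ := decomp y
    have hsplit : B (v - w) y = B v a + B w y * (B v u - 1) := by
      rw [map_sub, LinearMap.sub_apply]
      linear_combination congrArg (B v) ha + (B v).map_add a (B w y • u) +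
        (B v).map_smul (B w y) u
    rw [hsplit]
    exact dvd_add (hv a) (hvu'.mul_left _)
  exact ⟨-z, by rw [smul_neg, ← hz]; abel⟩

theorem exists_linearMap_extending_isometry (hπ : IsRegular π) (hunit : ¬ IsUnit π)
    (hres : ∀ a : R, π ∣ a ∨ π ∣ a - 1) (hsymm : B.IsSymm) (hB : NondegenerateMod B π)
    {w : Λ} (hw : B w w = π) (γ : ker (B w) ≃ₗ[R] ker (B w))
    (hγ : ∀ x y : ker (B w), B (γ x : Λ) (γ y : Λ) = B (x : Λ) (y : Λ)) :
    ∃ f : Λ →ₗ[R] Λ, f w = w ∧ ∀ a : ker (B w), f a = γ a := by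
  have hw_ne : ∀ z, w ≠ π • z := ne_smul_of_not_sq_dvd (B := B) <| by
    simpa [hw] using not_sq_dvd_sq_mul_sub_self hπ hunit 0
  obtain ⟨u, hu⟩ := exists_apply_eq_one_of_ne_smul hres hB hw hw_ne
  let k : ker (B w) := ⟨w - π • u, by simp [hw, hu]⟩
  have hk_norm : B k k = π ^ 2 * B u u - π := by
    simp only [k, map_sub, map_smul, LinearMap.sub_apply, LinearMap.smul_apply, smul_eq_mul,
      hw, hu, hsymm.eq u w]
    ring
  have hγk_ne : ∀ z, (γ k : Λ) ≠ π • z := ne_smul_of_not_sq_dvd (B := B) <| by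
    rw [hγ, hk_norm]
    exact not_sq_dvd_sq_mul_sub_self hπ hunit _
  have hγk_dvd (a : ker (B w)) : π ∣ B (γ k) a := by
    have hpair : B (γ k) a = B k (γ.symm a) := by
      rw [← hγ k, γ.apply_symm_apply]
    exact ⟨-B u (γ.symm a), by simp [hpair, k]⟩
  obtain ⟨u', hu'⟩ := exists_eq_sub_smul_of_dvd_on_ker hres hB hu hγk_dvd hγk_ne
  obtain ⟨f, hfu, hfγ⟩ := exists_linearMap_extending_ker hu ((ker (B w)).subtype ∘ₗ γ) u'
  refine ⟨f, ?_, hfγ⟩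
  calc f w = f (k + π • u) := by simp [k]
    _ = γ k + π • u' := by rw [map_add, map_smul, hfu, hfγ]; rfl
    _ = w := by rw [hu']; abel

theorem isometry_of_extends_isometry_ker {w : Λ} (hw : IsRegular (B w w)) (hsymm : B.IsSymm)
    {γ : ker (B w) → ker (B w)}
    (hγ : ∀ x y : ker (B w), B (γ x : Λ) (γ y : Λ) = B (x : Λ) (y : Λ))
    {f : Λ →ₗ[R] Λ} (hfw : f w = w) (hfγ : ∀ a : ker (B w), f a = γ a) (x y : Λ) :
    B (f x) (f y) = B x y := by
  have hker (a : ker (B w)) : B w a = 0 := a.2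
  have hker' (a : ker (B w)) : B a w = 0 := (hsymm.eq _ _).trans (hker a)
  have hcomp : B.compl₁₂ f f = B := by
    apply bilinForm_eq_of_eqOn_ker hw <;> intros <;>
      simp only [LinearMap.compl₁₂_apply, hfw, hfγ, hker, hker', hγ]
  exact LinearMap.congr_fun₂ hcomp x y

theorem comp_eq_id_of_extends_inverse [Module.IsTorsionFree R Λ] {φ : Λ →ₗ[R] R} {w : Λ}
    (hw : IsRegular (φ w)) {γ δ : ker φ → ker φ} (hγδ : Function.LeftInverse γ δ)
    {f g : Λ →ₗ[R] Λ} (hfw : f w = w) (hfγ : ∀ a : ker φ, f a = γ a)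
    (hgw : g w = w) (hgδ : ∀ a : ker φ, g a = δ a) : f ∘ₗ g = LinearMap.id :=
  linearMap_eq_of_eqOn_ker hw (by simp [hfw, hgw]) fun a => by simp [hgδ, hfγ, hγδ a]

theorem stmt_10_general [Module.IsTorsionFree R Λ] (hπ : IsRegular π) (hunit : ¬ IsUnit π)
    (hres : ∀ a : R, π ∣ a ∨ π ∣ a - 1) (hsymm : B.IsSymm) (hB : NondegenerateMod B π)
    {w : Λ} (hw : B w w = π) (γ : ker (B w) ≃ₗ[R] ker (B w))
    (hγ : ∀ x y : ker (B w), B (γ x : Λ) (γ y : Λ) = B (x : Λ) (y : Λ)) :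
    ∃! γt : Λ ≃ₗ[R] Λ,
      (∀ x y : Λ, B (γt x) (γt y) = B x y) ∧
      γt w = w ∧
      ∀ x : ker (B w), γt (x : Λ) = (γ x : Λ) := by
  have hγ_symm (x y : ker (B w)) : B (γ.symm x : Λ) (γ.symm y : Λ) = B (x : Λ) (y : Λ) := by
    rw [← hγ, γ.apply_symm_apply, γ.apply_symm_apply]
  obtain ⟨f, hfw, hfγ⟩ :=
    exists_linearMap_extending_isometry hπ hunit hres hsymm hB hw γ hγ
  obtain ⟨g, hgw, hgγ⟩ :=
    exists_linearMap_extending_isometry hπ hunit hres hsymm hB hw γ.symm hγ_symm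
  have hreg : IsRegular (B w w) := hw ▸ hπ
  have hfg : f ∘ₗ g = LinearMap.id :=
    comp_eq_id_of_extends_inverse hreg γ.apply_symm_apply hfw hfγ hgw hgγ
  have hgf : g ∘ₗ f = LinearMap.id :=
    comp_eq_id_of_extends_inverse hreg γ.symm_apply_apply hgw hgγ hfw hfγ
  refine ⟨.ofLinearMap f g hfg hgf,
    ⟨isometry_of_extends_isometry_ker hreg hsymm hγ hfw hfγ, hfw, hfγ⟩, ?_⟩
  rintro γt ⟨-, hγtw, hγtγ⟩
  exact LinearEquiv.toLinearMap_injective <| linearMap_eq_of_eqOn_ker hreg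
    (hγtw.trans hfw.symm) fun a => (hγtγ a).trans (hfγ a).symm

end Lattice

/-- Let `Λ` be an even unimodular lattice and `w ∈ Λ` with `(w,w) = 2`. Then every isometry
`γ` of the orthogonal complement `w^⊥ ⊆ Λ` extends uniquely to an isometry `γ̃` of `Λ`
with `γ̃(w) = w`. -/
theorem stmt_10 {Λ : Type*} [AddCommGroup Λ] [Module ℤ Λ]
    [Module.Free ℤ Λ] [Module.Finite ℤ Λ]
    (B : LinearMap.BilinForm ℤ Λ)
    (hsymm : ∀ x y : Λ, B x y = B y x)
    (heven : ∀ x : Λ, ∃ k : ℤ, B x x = 2 * k)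
    (hunimod : Function.Bijective fun x : Λ => (B x : Λ →ₗ[ℤ] ℤ))
    (w : Λ) (hw : B w w = 2)
    (γ : (LinearMap.ker (B w)) ≃ₗ[ℤ] (LinearMap.ker (B w)))
    (hγ : ∀ x y : LinearMap.ker (B w), B (γ x : Λ) (γ y : Λ) = B (x : Λ) (y : Λ)) :
    ∃! γt : Λ ≃ₗ[ℤ] Λ,
      (∀ x y : Λ, B (γt x) (γt y) = B x y) ∧
      γt w = w ∧
      ∀ x : LinearMap.ker (B w), γt (x : Λ) = (γ x : Λ) := by
  -- On `w^⊥` the statement elaborates to the canonical `ℤ`-action, not the one induced from `Λ`.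
  obtain rfl : ‹Module ℤ Λ› = AddCommGroup.toIntModule Λ := Subsingleton.elim _ _
  have htwo : IsRegular (2 : ℤ) := IsRegular.of_ne_zero two_ne_zero
  exact stmt_10_general htwo (by decide) (by grind) ⟨hsymm⟩
    (nondegenerateMod_of_bijective htwo hunimod) hw γ hγ
end
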